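/- Let S be a factorizable inverse monoid with semilattice of idempotents E and group of units G such that the natural connection θ is a dual isomorphism from E onto a sublattice of L(G). If e₁, e₂, f ∈ E are such that e₁ is central in e₂↑ and f is central in S, then the idempotent e₁f is central in (e₂f)↑. -/

import Mathlib

/-- An inverse monoid: a monoid in which every element `a` has an inverse `a⁻¹`
satisfying `a * a⁻¹ * a = a` and `a⁻¹ * a * a⁻¹ = a⁻¹`, and this inverse is unique. -/
class InverseMonoid (S : Type*) extends Monoid S, Inv S where
  mul_inv_mul : ∀ a : S, a * a⁻¹ * a = a
  inv_mul_inv : ∀ a : S, a⁻¹ * a * a⁻¹ = a⁻¹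
  inv_unique : ∀ a b : S, a * b * a = a → b * a * b = b → b = a⁻¹

/-- An inverse monoid with a (two-sided absorbing) zero element. -/
class InverseMonoidWithZero (S : Type*) extends InverseMonoid S, Zero S where
  zero_mul : ∀ a : S, 0 * a = 0
  mul_zero : ∀ a : S, a * 0 = 0

/-- The natural partial order on an inverse monoid: `a ≤ b` iff `a = e * b`
for some idempotent `e`. -/
def NatLe {S : Type*} [Monoid S] (a b : S) : Prop :=
  ∃ e : S, IsIdempotentElem e ∧ a = e * b

/-- The filter `e↑ = {s | e ≤ s}` generated by `e`. -/
def upfilter {S : Type*} [Monoid S] (e : S) : Set S := {s | NatLe e s}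

/-- `c` is central in (a subset) `T`: it belongs to `T` and commutes with all elements of `T`. -/
def CentralIn {S : Type*} [Mul S] (T : Set S) (c : S) : Prop :=
  c ∈ T ∧ ∀ s ∈ T, c * s = s * c

/-- A monoid is factorizable if every element is a product of an idempotent and a unit. -/
def Factorizable (S : Type*) [Monoid S] : Prop :=
  ∀ s : S, ∃ e g : S, IsIdempotentElem e ∧ IsUnit g ∧ s = e * g

/-- The natural connection `θ`: for an (idempotent) `e`, the subgroup
`eθ = {g ∈ G : e * g = e}` of the group of units. -/
def natconn {S : Type*} [Monoid S] (e : S) : Subgroup Sˣ where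
  carrier := {g : Sˣ | e * (g : S) = e}
  one_mem' := by simp
  mul_mem' := by
    intro a b ha hb
    simp only [Set.mem_setOf_eq, Units.val_mul] at *
    rw [← mul_assoc, ha, hb]
  inv_mem' := by
    intro a ha
    simp only [Set.mem_setOf_eq] at *
    nth_rewrite 1 [← ha]
    rw [mul_assoc, ← Units.val_mul, mul_inv_cancel, Units.val_one, mul_one]

/-- The natural connection is a dual isomorphism from the idempotents onto a
sublattice of the lattice of subgroups of the group of units: it is injective on
idempotents, order-reversing in both directions, and its image is closed under
joins and meets of subgroups. -/
def NatconnDualIso (S : Type*) [Monoid S] : Prop :=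
  (∀ e f : S, IsIdempotentElem e → IsIdempotentElem f → natconn e = natconn f → e = f) ∧
  (∀ e f : S, IsIdempotentElem e → IsIdempotentElem f →
    (NatLe e f ↔ natconn f ≤ natconn e)) ∧
  (∀ e f : S, IsIdempotentElem e → IsIdempotentElem f →
    (∃ h : S, IsIdempotentElem h ∧ natconn h = natconn e ⊔ natconn f) ∧
    (∃ h : S, IsIdempotentElem h ∧ natconn h = natconn e ⊓ natconn f))

/-- `j` is the join (least upper bound) of `e` and `f` with respect to the natural order. -/
def IsNatJoin {S : Type*} [Monoid S] (e f j : S) : Prop :=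
  NatLe e j ∧ NatLe f j ∧ ∀ x : S, NatLe e x → NatLe f x → NatLe j x

/-- `F_{e,f} = f · e↑`. -/
def Fef {S : Type*} [Monoid S] (e f : S) : Set S := (f * ·) '' upfilter e

/-- `UF_{e,f}`: the group of units of the monoid `F_{e,f}` (whose identity is `f`). -/
def UFef {S : Type*} [Monoid S] (e f : S) : Set S :=
  {x ∈ Fef e f | ∃ y ∈ Fef e f, x * y = f ∧ y * x = f}

/-- The centre of a subset `T`. -/
def ZIn {S : Type*} [Mul S] (T : Set S) : Set S := {x ∈ T | ∀ y ∈ T, x * y = y * x}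

/-- Two subsets are isomorphic as semigroups (with the induced multiplication). -/
def SubIso {S : Type*} [Mul S] (A B : Set S) : Prop :=
  ∃ φ : S → S, Set.BijOn φ A B ∧ ∀ a ∈ A, ∀ b ∈ A, φ (a * b) = φ a * φ b

/-- A subcentral idempotent series between `0` and `a`. -/
def IsSubcentralSeriesBetween {S : Type*} [Monoid S] [Zero S] (n : ℕ) (c : ℕ → S) (a : S) :
    Prop :=
  c 0 = 0 ∧ c n = a ∧ (∀ i ≤ n, IsIdempotentElem (c i)) ∧
    ∀ i < n, CentralIn (upfilter (c i)) (c (i + 1))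

/-- A subcentral idempotent series of `S` (between `0` and `1`). -/
def IsSubcentralSeries {S : Type*} [Monoid S] [Zero S] (n : ℕ) (c : ℕ → S) : Prop :=
  IsSubcentralSeriesBetween n c 1

/-- A central idempotent series of `S`. -/
def IsCentralSeries {S : Type*} [Monoid S] [Zero S] (n : ℕ) (c : ℕ → S) : Prop :=
  c 0 = 0 ∧ c n = 1 ∧ (∀ i ≤ n, IsIdempotentElem (c i)) ∧
    (∀ i < n, NatLe (c i) (c (i + 1))) ∧
    ∀ i < n, CentralIn Set.univ (c (i + 1))

/-- A subcentral idempotent: one occurring in some subcentral idempotent series of `S`. -/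
def IsSubcentralIdem {S : Type*} [Monoid S] [Zero S] (e : S) : Prop :=
  ∃ (n : ℕ) (c : ℕ → S), IsSubcentralSeries n c ∧ ∃ i ≤ n, c i = e

/-- A `G`-nilpotent series: a chain of central idempotents from `0` to `1` with
`F_{eᵢ,eᵢ₊₁} ⊆ Z(F_{0,eᵢ₊₁})`. -/
def GNilpotentSeries {S : Type*} [Monoid S] [Zero S] (n : ℕ) (c : ℕ → S) : Prop :=
  c 0 = 0 ∧ c n = 1 ∧ (∀ i ≤ n, IsIdempotentElem (c i) ∧ CentralIn Set.univ (c i)) ∧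
    (∀ i < n, NatLe (c i) (c (i + 1))) ∧
    ∀ i < n, Fef (c i) (c (i + 1)) ⊆ ZIn (Fef 0 (c (i + 1)))

/-- A `G`-solvable series: a chain of central idempotents from `0` to `1` with
each `F_{eᵢ,eᵢ₊₁}` commutative. -/
def GSolvableSeries {S : Type*} [Monoid S] [Zero S] (n : ℕ) (c : ℕ → S) : Prop :=
  c 0 = 0 ∧ c n = 1 ∧ (∀ i ≤ n, IsIdempotentElem (c i) ∧ CentralIn Set.univ (c i)) ∧
    (∀ i < n, NatLe (c i) (c (i + 1))) ∧
    ∀ i < n, ∀ x ∈ Fef (c i) (c (i + 1)), ∀ y ∈ Fef (c i) (c (i + 1)), x * y = y * x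

/-- `S` is `G`-nilpotent. -/
def GNilpotent (S : Type*) [Monoid S] [Zero S] : Prop :=
  ∃ (n : ℕ) (c : ℕ → S), GNilpotentSeries n c

/-- `S` is `G`-solvable. -/
def GSolvable (S : Type*) [Monoid S] [Zero S] : Prop :=
  ∃ (n : ℕ) (c : ℕ → S), GSolvableSeries n c

/-- Two idempotent series are isomorphic: same length, and a one-to-one correspondence
between their factors under which corresponding factors are isomorphic. -/
def SeriesIso {S : Type*} [Monoid S] (n : ℕ) (c : ℕ → S) (n' : ℕ) (d : ℕ → S) : Prop :=
  n = n' ∧ ∃ σ : ℕ → ℕ, Set.BijOn σ {i | i < n} {i | i < n'} ∧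
    ∀ i < n, SubIso (Fef (c i) (c (i + 1))) (Fef (d (σ i)) (d (σ i + 1)))

/-- A composition series (for a kind `P` of series): it has no repeated terms, and any
refinement of it (of the same kind) only repeats its terms. -/
def IsCompositionOf {S : Type*} (P : ℕ → (ℕ → S) → Prop) (n : ℕ) (c : ℕ → S) : Prop :=
  P n c ∧ (∀ i ≤ n, ∀ j ≤ n, c i = c j → i = j) ∧
    ∀ (m : ℕ) (d : ℕ → S), P m d → (∀ i ≤ n, ∃ j ≤ m, d j = c i) →
      ∀ j ≤ m, ∃ i ≤ n, d j = c i

theorem idem_comm_aux {S : Type*} [InverseMonoid S] {e f : S}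
    (he : IsIdempotentElem e) (hf : IsIdempotentElem f) : IsIdempotentElem (e * f) := by
  have he' : ∀ y : S, e * (e * y) = e * y := fun y => by rw [← mul_assoc, he.eq]
  have hf' : ∀ y : S, f * (f * y) = f * y := fun y => by rw [← mul_assoc, hf.eq]
  have h1 := InverseMonoid.mul_inv_mul (e * f)
  have h2 := InverseMonoid.inv_mul_inv (e * f)
  have h3 := InverseMonoid.inv_unique (e * f) (f * (e * f)⁻¹ * e)
  generalize (e * f)⁻¹ = x at h1 h2 h3
  have hx : f * x * e = x := by
    apply h3
    · simp only [mul_assoc, he', hf'] at h1 ⊢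
      exact h1
    · simp only [mul_assoc, he', hf'] at h2 ⊢
      have := congrArg (fun t => f * (t * e)) h2
      simpa only [mul_assoc] using this
  have hxx : x * x = x := by
    have := congrArg (fun t => f * (t * e)) h2
    simp only [mul_assoc] at this hx
    calc x * x = (f * (x * e)) * (f * (x * e)) := by rw [hx]
      _ = x := by simp only [mul_assoc]; rw [this, hx]
  have h4 := InverseMonoid.inv_unique x (e * f) h2 h1
  have h5 := InverseMonoid.inv_unique x x (by rw [hxx, hxx]) (by rw [hxx, hxx])
  rw [h4, ← h5]
  exact hxx

theorem idem_comm {S : Type*} [InverseMonoid S] {e f : S}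
    (he : IsIdempotentElem e) (hf : IsIdempotentElem f) : e * f = f * e := by
  have he' : ∀ y : S, e * (e * y) = e * y := fun y => by rw [← mul_assoc, he.eq]
  have hf' : ∀ y : S, f * (f * y) = f * y := fun y => by rw [← mul_assoc, hf.eq]
  have h1 := (idem_comm_aux he hf).eq
  have h2 := (idem_comm_aux hf he).eq
  have h3 := InverseMonoid.inv_unique (e * f) (e * f) (by rw [h1, h1]) (by rw [h1, h1])
  have h4 := InverseMonoid.inv_unique (e * f) (f * e)
    (by simp only [mul_assoc, he', hf'] at h1 ⊢; exact h1)
    (by simp only [mul_assoc, he', hf'] at h2 ⊢; exact h2)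
  rw [h3, ← h4]

/-- The subgroup of units commuting with `c`. -/
def commUnits {S : Type*} [Monoid S] (c : S) : Subgroup Sˣ where
  carrier := {g : Sˣ | Commute c (g : S)}
  one_mem' := by simp
  mul_mem' := by
    intro a b ha hb
    simp only [Set.mem_setOf_eq, Units.val_mul] at *
    exact ha.mul_right hb
  inv_mem' := by
    intro a ha
    exact Commute.units_inv_right ha

/-- In a factorizable inverse monoid whose natural connection is a dual
isomorphism onto a sublattice of the lattice of subgroups of the group of units:
if `e₁` is central in `e₂↑` and `f` is central in `S`, then the idempotent `e₁f` is
central in `(e₂f)↑`. -/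
theorem stmt_3 {S : Type*} [InverseMonoid S] (hfact : Factorizable S)
    (hθ : NatconnDualIso S) (e₁ e₂ f : S)
    (he₁ : IsIdempotentElem e₁) (he₂ : IsIdempotentElem e₂) (hf : IsIdempotentElem f)
    (hc₁ : CentralIn (upfilter e₂) e₁) (hcf : CentralIn Set.univ f) :
    IsIdempotentElem (e₁ * f) ∧ CentralIn (upfilter (e₂ * f)) (e₁ * f) := by
  have hab := idem_comm_aux he₁ hf
  refine ⟨hab, ?_, ?_⟩
  · obtain ⟨k, hk, h⟩ := hc₁.1
    exact ⟨k, hk, by rw [h, mul_assoc]⟩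
  rintro s ⟨k, hk, hs⟩
  obtain ⟨e, g, he, ⟨g, rfl⟩, rfl⟩ := hfact s
  have hp := idem_comm_aux hk he
  have ha := idem_comm_aux he₂ hf
  have hfc : ∀ x, f * x = x * f := fun x => hcf.2 x trivial
  rw [← mul_assoc] at hs
  have hag : e₂ * f * (g : S) = e₂ * f := by
    have hpa : (k * e) * (e₂ * f) = e₂ * f := by
      rw [hs, ← mul_assoc, hp.eq]
    calc e₂ * f * (g : S) = (k * e) * (e₂ * f) * g := by rw [hpa]
      _ = (e₂ * f) * ((k * e) * g) := by rw [idem_comm hp ha, mul_assoc]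
      _ = e₂ * f := by rw [← hs, ha.eq]
  have hgmem : g ∈ natconn e₂ ⊔ natconn f := by
    obtain ⟨⟨h, hh, hθh⟩, -⟩ := hθ.2.2 e₂ f he₂ hf
    obtain ⟨a, -, h1⟩ := (hθ.2.1 h e₂ hh he₂).2 (hθh ▸ le_sup_left)
    obtain ⟨b, -, h2⟩ := (hθ.2.1 h f hh hf).2 (hθh ▸ le_sup_right)
    have h1' : h * e₂ = h := by rw [h1, mul_assoc, he₂.eq]
    have h2' : h * f = h := by rw [h2, mul_assoc, hf.eq]
    rw [← hθh]
    change h * (g : S) = h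
    have h3 : h * (e₂ * f) = h := by rw [← mul_assoc, h1', h2']
    rw [← h3, mul_assoc, hag]
  have hle : natconn e₂ ⊔ natconn f ≤ commUnits (e₁ * f) := by
    refine sup_le ?_ ?_
    · intro x hx
      have hx' : e₂ * (x : S) = e₂ := hx
      have h1 := hc₁.2 x ⟨e₂, he₂, hx'.symm⟩
      exact Commute.mul_left h1 (hfc x)
    · intro x hx
      have hx' : f * (x : S) = f := hx
      have hx2 : (x : S) * f = f := by rw [← hfc, hx']
      change e₁ * f * (x : S) = x * (e₁ * f)
      rw [mul_assoc, hx', ← hfc e₁, ← mul_assoc, hx2]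
  have h1 : Commute (e₁ * f) e := idem_comm hab he
  have h2 : Commute (e₁ * f) (g : S) := hle hgmem
  exact h1.mul_right h2
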